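/- arXiv:2105.12966 — 8 statements merged into one kernel-verified Lean document; each statement's English description precedes it below -/
import Mathlib

section
/- Let σ : ℂ be such that G(σ) and Wᵀ * G(σ) * V are invertible. If x1(σ) lies in the column span of V (i.e., there exists c : Fin r → ℂ with x1(σ) = V *ᵥ c), then the reduced-order transfer function interpolates the full-order one at σ: Ĥ1(σ) = H1(σ). -/
open Matrix
open scoped Kronecker

noncomputable section

/-- Kronecker product of vectors: `(u ⊗ v) (l, j) = u l * v j`. -/
def vkron {n : ℕ} (u v : Fin n → ℂ) : Fin n × Fin n → ℂ :=
  fun p => u p.1 * v p.2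

/-- The matrix pencil `G(s) = s • E - A`. -/
def Gm {n : ℕ} (E A : Matrix (Fin n) (Fin n) ℂ) (s : ℂ) : Matrix (Fin n) (Fin n) ℂ :=
  s • E - A

/-- Primal state of the first subsystem: `x1(s) = G(s)⁻¹ *ᵥ B`. -/
def x1 {n : ℕ} (E A : Matrix (Fin n) (Fin n) ℂ) (B : Fin n → ℂ) (s : ℂ) : Fin n → ℂ :=
  (Gm E A s)⁻¹ *ᵥ B

/-- First-order transfer function `H1(s) = C ⬝ᵥ x1(s)`. -/
def H1 {n : ℕ} (E A : Matrix (Fin n) (Fin n) ℂ) (B C : Fin n → ℂ) (s : ℂ) : ℂ :=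
  C ⬝ᵥ x1 E A B s

/-- Second-order input term `B₂(s1, s2)`. -/
def B2 {n : ℕ} (E A N : Matrix (Fin n) (Fin n) ℂ) (Q : Matrix (Fin n) (Fin n × Fin n) ℂ)
    (B : Fin n → ℂ) (s1 s2 : ℂ) : Fin n → ℂ :=
  Q *ᵥ vkron (x1 E A B s1) (x1 E A B s2) + (1/2 : ℂ) • (N *ᵥ (x1 E A B s1 + x1 E A B s2))

/-- Primal state of the second subsystem: `x2(s1, s2) = G(s1+s2)⁻¹ *ᵥ B₂(s1, s2)`. -/
def x2 {n : ℕ} (E A N : Matrix (Fin n) (Fin n) ℂ) (Q : Matrix (Fin n) (Fin n × Fin n) ℂ)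
    (B : Fin n → ℂ) (s1 s2 : ℂ) : Fin n → ℂ :=
  (Gm E A (s1 + s2))⁻¹ *ᵥ B2 E A N Q B s1 s2

/-- Second-order (symmetric) transfer function `H2(s1, s2) = C ⬝ᵥ x2(s1, s2)`. -/
def H2 {n : ℕ} (E A N : Matrix (Fin n) (Fin n) ℂ) (Q : Matrix (Fin n) (Fin n × Fin n) ℂ)
    (B C : Fin n → ℂ) (s1 s2 : ℂ) : ℂ :=
  C ⬝ᵥ x2 E A N Q B s1 s2

/-- Dual state of the first subsystem: `y1(s) = (G(s)ᵀ)⁻¹ *ᵥ C`. -/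
def y1 {n : ℕ} (E A : Matrix (Fin n) (Fin n) ℂ) (C : Fin n → ℂ) (s : ℂ) : Fin n → ℂ :=
  ((Gm E A s)ᵀ)⁻¹ *ᵥ C

/-- Mode-2 matricization: `Q⁽²⁾ j (l, i) = Q i (l, j)`. -/
def mode2 {n : ℕ} (Q : Matrix (Fin n) (Fin n × Fin n) ℂ) : Matrix (Fin n) (Fin n × Fin n) ℂ :=
  fun j p => Q p.2 (p.1, j)

/-- Dual output term `C₂(s1, s2)`. -/
def C2 {n : ℕ} (E A N : Matrix (Fin n) (Fin n) ℂ) (Q : Matrix (Fin n) (Fin n × Fin n) ℂ)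
    (B C : Fin n → ℂ) (s1 s2 : ℂ) : Fin n → ℂ :=
  mode2 Q *ᵥ vkron (x1 E A B s2) (y1 E A C (s1 + s2)) +
    (1/2 : ℂ) • (Nᵀ *ᵥ y1 E A C (s1 + s2))

/-- Dual state of the second subsystem: `y2(s1, s2) = (G(s1)ᵀ)⁻¹ *ᵥ C₂(s1, s2)`. -/
def y2 {n : ℕ} (E A N : Matrix (Fin n) (Fin n) ℂ) (Q : Matrix (Fin n) (Fin n × Fin n) ℂ)
    (B C : Fin n → ℂ) (s1 s2 : ℂ) : Fin n → ℂ :=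
  ((Gm E A s1)ᵀ)⁻¹ *ᵥ C2 E A N Q B C s1 s2

/-- `Q` is symmetric: `Q *ᵥ (u ⊗ v) = Q *ᵥ (v ⊗ u)` for all `u, v`. -/
def QSymm {n : ℕ} (Q : Matrix (Fin n) (Fin n × Fin n) ℂ) : Prop :=
  ∀ u v : Fin n → ℂ, Q *ᵥ vkron u v = Q *ᵥ vkron v u

/-- Euclidean (ℓ²) norm of a vector in `Fin n → ℂ`. -/
def vnorm {n : ℕ} (v : Fin n → ℂ) : ℝ := ‖(WithLp.equiv 2 (Fin n → ℂ)).symm v‖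

/-- ℓ²-induced operator norm of a square complex matrix. -/
def mnorm {n : ℕ} (M : Matrix (Fin n) (Fin n) ℂ) : ℝ := ‖Matrix.toEuclideanCLM (𝕜 := ℂ) M‖

theorem reduced_H1_interpolation_primal {n r : ℕ}
    (E A N : Matrix (Fin n) (Fin n) ℂ) (Q : Matrix (Fin n) (Fin n × Fin n) ℂ)
    (B C : Fin n → ℂ) (V W : Matrix (Fin n) (Fin r) ℂ) (σ : ℂ)
    (hG : IsUnit (Gm E A σ)) (hGr : IsUnit (Wᵀ * Gm E A σ * V))
    (hx : ∃ c : Fin r → ℂ, x1 E A B σ = V *ᵥ c) :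
    H1 (Wᵀ * E * V) (Wᵀ * A * V) (Wᵀ *ᵥ B) (Vᵀ *ᵥ C) σ = H1 E A B C σ := by
  obtain ⟨c, hc⟩ := hx
  have hB : B = Gm E A σ *ᵥ (V *ᵥ c) := by
    rw [← hc, x1, Matrix.mulVec_mulVec,
      Matrix.mul_nonsing_inv _ ((Matrix.isUnit_iff_isUnit_det _).1 hG), Matrix.one_mulVec]
  have hGred : Gm (Wᵀ * E * V) (Wᵀ * A * V) σ = Wᵀ * Gm E A σ * V := by
    simp only [Gm, Matrix.mul_sub, Matrix.sub_mul, Matrix.mul_smul, Matrix.smul_mul]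
  have hxr : x1 (Wᵀ * E * V) (Wᵀ * A * V) (Wᵀ *ᵥ B) σ = c := by
    have hWB : Wᵀ *ᵥ B = (Wᵀ * Gm E A σ * V) *ᵥ c := by
      rw [hB, Matrix.mulVec_mulVec, Matrix.mulVec_mulVec, Matrix.mul_assoc]
    rw [x1, hGred, hWB, Matrix.mulVec_mulVec,
      Matrix.nonsing_inv_mul _ ((Matrix.isUnit_iff_isUnit_det _).1 hGr), Matrix.one_mulVec]
  rw [H1, H1, hxr, hc, Matrix.mulVec_transpose, Matrix.dotProduct_mulVec]
end
end

section
/- Let σ : ℂ be such that G(σ) and Wᵀ * G(σ) * V are invertible. If the dual vector y1(σ) = (G(σ)ᵀ)⁻¹ *ᵥ C lies in the column span of W (i.e., there exists d : Fin r → ℂ with y1(σ) = W *ᵥ d), then Ĥ1(σ) = H1(σ). -/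
open Matrix
open scoped Kronecker

noncomputable section

theorem reduced_H1_interpolation_dual {n r : ℕ}
    (E A N : Matrix (Fin n) (Fin n) ℂ) (Q : Matrix (Fin n) (Fin n × Fin n) ℂ)
    (B C : Fin n → ℂ) (V W : Matrix (Fin n) (Fin r) ℂ) (σ : ℂ)
    (hG : IsUnit (Gm E A σ)) (hGr : IsUnit (Wᵀ * Gm E A σ * V))
    (hy : ∃ d : Fin r → ℂ, y1 E A C σ = W *ᵥ d) :
    H1 (Wᵀ * E * V) (Wᵀ * A * V) (Wᵀ *ᵥ B) (Vᵀ *ᵥ C) σ = H1 E A B C σ := by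
  obtain ⟨d, hd⟩ := hy
  have hM : Gm (Wᵀ * E * V) (Wᵀ * A * V) σ = Wᵀ * Gm E A σ * V := by
    simp [Gm, Matrix.mul_sub, Matrix.sub_mul]
  have hGd : IsUnit (Gm E A σ).det := (Matrix.isUnit_iff_isUnit_det _).1 hG
  have hGtd : IsUnit ((Gm E A σ)ᵀ).det := by rwa [Matrix.det_transpose]
  have hMd : IsUnit (Wᵀ * Gm E A σ * V).det := (Matrix.isUnit_iff_isUnit_det _).1 hGr
  have hC : C = (Gm E A σ)ᵀ *ᵥ (W *ᵥ d) := by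
    rw [← hd, y1, Matrix.mulVec_mulVec, Matrix.mul_nonsing_inv _ hGtd, Matrix.one_mulVec]
  have hVC : Vᵀ *ᵥ C = (Wᵀ * Gm E A σ * V)ᵀ *ᵥ d := by
    rw [hC]
    simp only [Matrix.mulVec_mulVec, Matrix.transpose_mul, Matrix.transpose_transpose]
  have e1 : H1 E A B C σ = (W *ᵥ d) ⬝ᵥ B := by
    rw [H1, x1]
    nth_rewrite 1 [hC]
    rw [Matrix.mulVec_transpose, ← Matrix.dotProduct_mulVec, Matrix.mulVec_mulVec,
      Matrix.mul_nonsing_inv _ hGd, Matrix.one_mulVec]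
  rw [e1, H1, x1, hM, hVC, Matrix.mulVec_transpose, ← Matrix.dotProduct_mulVec,
    Matrix.mulVec_mulVec, Matrix.mul_nonsing_inv _ hMd, Matrix.one_mulVec,
    Matrix.dotProduct_mulVec, Matrix.vecMul_transpose]
end
end

section
/- Let σ : ℂ be such that G(σ) and Wᵀ * G(σ) * V are invertible. If x1(σ) lies in the column span of V and y1(σ) = (G(σ)ᵀ)⁻¹ *ᵥ C lies in the column span of W, then the reduced-order model is a Hermite interpolant at σ: deriv H1 σ = deriv Ĥ1 σ (in addition to H1(σ) = Ĥ1(σ)). -/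
open Matrix
open scoped Kronecker

noncomputable section

section helper
attribute [local instance] Matrix.linftyOpNormedRing Matrix.linftyOpNormedAlgebra

theorem hasDerivAt_H1_aux {n : ℕ} (E A : Matrix (Fin n) (Fin n) ℂ) (B C : Fin n → ℂ) (s : ℂ)
    (hG : IsUnit (Gm E A s)) :
    HasDerivAt (fun s => H1 E A B C s) (-(y1 E A C s ⬝ᵥ (E *ᵥ x1 E A B s))) s := by
  obtain ⟨u, hu⟩ := hG
  have h1 : HasDerivAt (fun s : ℂ => Gm E A s) E s := by
    have := ((hasDerivAt_id s).smul_const E).sub_const A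
    rw [one_smul] at this
    exact this
  have h2 := hasFDerivAt_ringInverse (𝕜 := ℂ) u
  rw [hu] at h2
  have h3 := h2.comp_hasDerivAt s h1
  let L : Matrix (Fin n) (Fin n) ℂ →ₗ[ℂ] ℂ :=
    { toFun := fun M => C ⬝ᵥ (M *ᵥ B)
      map_add' := fun M M' => by simp [Matrix.add_mulVec, dotProduct_add]
      map_smul' := fun c M => by simp [Matrix.smul_mulVec, dotProduct_smul] }
  have h4 := (LinearMap.toContinuousLinearMap L).hasFDerivAt.comp_hasDerivAt s h3
  have hinv : ((u⁻¹ : (Matrix (Fin n) (Fin n) ℂ)ˣ) : Matrix (Fin n) (Fin n) ℂ) = (Gm E A s)⁻¹ := by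
    rw [← hu, Matrix.coe_units_inv]
  have hf : (fun s => H1 E A B C s) =
      (LinearMap.toContinuousLinearMap L) ∘ Ring.inverse ∘ Gm E A := by
    funext t
    simp [H1, x1, L, Matrix.nonsing_inv_eq_ringInverse]
  have hv : -(y1 E A C s ⬝ᵥ (E *ᵥ x1 E A B s)) = (LinearMap.toContinuousLinearMap L)
      ((-ContinuousLinearMap.mulLeftRight ℂ (Matrix (Fin n) (Fin n) ℂ) ↑u⁻¹ ↑u⁻¹) E) := by
    rw [_root_.neg_apply, ContinuousLinearMap.mulLeftRight_apply, hinv, map_neg]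
    simp only [LinearMap.coe_toContinuousLinearMap', L, LinearMap.coe_mk, AddHom.coe_mk]
    rw [y1, x1, ← Matrix.transpose_nonsing_inv, Matrix.mulVec_transpose,
      ← Matrix.dotProduct_mulVec, Matrix.mulVec_mulVec, Matrix.mulVec_mulVec, Matrix.mul_assoc]
  rw [hf, hv]
  exact h4

end helper

theorem reduced_H1_hermite_interpolation {n r : ℕ}
    (E A N : Matrix (Fin n) (Fin n) ℂ) (Q : Matrix (Fin n) (Fin n × Fin n) ℂ)
    (B C : Fin n → ℂ) (V W : Matrix (Fin n) (Fin r) ℂ) (σ : ℂ)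
    (hG : IsUnit (Gm E A σ)) (hGr : IsUnit (Wᵀ * Gm E A σ * V))
    (hx : ∃ c : Fin r → ℂ, x1 E A B σ = V *ᵥ c)
    (hy : ∃ d : Fin r → ℂ, y1 E A C σ = W *ᵥ d) :
    H1 E A B C σ = H1 (Wᵀ * E * V) (Wᵀ * A * V) (Wᵀ *ᵥ B) (Vᵀ *ᵥ C) σ ∧
    deriv (fun s => H1 E A B C s) σ =
      deriv (fun s => H1 (Wᵀ * E * V) (Wᵀ * A * V) (Wᵀ *ᵥ B) (Vᵀ *ᵥ C) s) σ := by
  obtain ⟨c, hc⟩ := hx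
  obtain ⟨d, hd⟩ := hy
  have hGm : Gm (Wᵀ * E * V) (Wᵀ * A * V) σ = Wᵀ * Gm E A σ * V := by
    simp [Gm, Matrix.mul_sub, Matrix.sub_mul]
  have hdet := (Matrix.isUnit_iff_isUnit_det _).1 hG
  have hdetr := (Matrix.isUnit_iff_isUnit_det _).1 hGr
  have hB : Gm E A σ *ᵥ (V *ᵥ c) = B := by
    rw [← hc, x1, Matrix.mulVec_mulVec, Matrix.mul_nonsing_inv _ hdet, Matrix.one_mulVec]
  have hC : (Gm E A σ)ᵀ *ᵥ (W *ᵥ d) = C := by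
    rw [← hd, y1, Matrix.mulVec_mulVec, Matrix.mul_nonsing_inv _ (by rwa [Matrix.det_transpose]),
      Matrix.one_mulVec]
  have hxr : x1 (Wᵀ * E * V) (Wᵀ * A * V) (Wᵀ *ᵥ B) σ = c := by
    have : Wᵀ *ᵥ B = (Wᵀ * Gm E A σ * V) *ᵥ c := by
      rw [← hB]; simp only [Matrix.mulVec_mulVec, Matrix.mul_assoc]
    rw [x1, hGm, this, Matrix.mulVec_mulVec, Matrix.nonsing_inv_mul _ hdetr, Matrix.one_mulVec]
  have hyr : y1 (Wᵀ * E * V) (Wᵀ * A * V) (Vᵀ *ᵥ C) σ = d := by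
    have : Vᵀ *ᵥ C = (Wᵀ * Gm E A σ * V)ᵀ *ᵥ d := by
      rw [← hC]
      simp only [Matrix.mulVec_mulVec, Matrix.mul_assoc, Matrix.transpose_mul,
        Matrix.transpose_transpose]
    rw [y1, hGm, this, Matrix.mulVec_mulVec,
      Matrix.nonsing_inv_mul _ (by rwa [Matrix.det_transpose]), Matrix.one_mulVec]
  constructor
  · rw [H1, H1, hxr, hc, Matrix.mulVec_transpose, Matrix.dotProduct_mulVec]
  · rw [(hasDerivAt_H1_aux E A B C σ hG).deriv,
      (hasDerivAt_H1_aux _ _ _ _ σ (by rw [hGm]; exact hGr)).deriv, hxr, hyr, hc, hd]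
    congr 1
    rw [← Matrix.mulVec_mulVec, ← Matrix.mulVec_mulVec, Matrix.dotProduct_mulVec d,
      Matrix.vecMul_transpose]
end
end

section
/- Let σ1, σ2 : ℂ be such that G(σ1), G(σ2), G(σ1+σ2) and Wᵀ * G(σ1) * V, Wᵀ * G(σ2) * V, Wᵀ * G(σ1+σ2) * V are invertible. If x1(σ1), x1(σ2) and x2(σ1, σ2) all lie in the column span of V, then the reduced second-order transfer function interpolates the full one: Ĥ2(σ1, σ2) = H2(σ1, σ2). -/
open Matrix
open scoped Kronecker

noncomputable section

theorem Gm_reduced {n r : ℕ} (E A : Matrix (Fin n) (Fin n) ℂ) (V W : Matrix (Fin n) (Fin r) ℂ)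
    (s : ℂ) : Gm (Wᵀ * E * V) (Wᵀ * A * V) s = Wᵀ * Gm E A s * V := by
  simp [Gm, Matrix.mul_sub, Matrix.sub_mul]

theorem proj_solve {n r : ℕ} (G : Matrix (Fin n) (Fin n) ℂ) (V W : Matrix (Fin n) (Fin r) ℂ)
    (b : Fin n → ℂ) (c : Fin r → ℂ) (hG : IsUnit G) (hGr : IsUnit (Wᵀ * G * V))
    (h : G⁻¹ *ᵥ b = V *ᵥ c) : (Wᵀ * G * V)⁻¹ *ᵥ (Wᵀ *ᵥ b) = c := by
  have hb : b = G *ᵥ (V *ᵥ c) := by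
    rw [← h, Matrix.mulVec_mulVec, Matrix.mul_nonsing_inv _ ((Matrix.isUnit_iff_isUnit_det _).1 hG),
      Matrix.one_mulVec]
  have hb' : Wᵀ *ᵥ b = (Wᵀ * G * V) *ᵥ c := by
    rw [hb]; simp only [Matrix.mulVec_mulVec, Matrix.mul_assoc]
  rw [hb', Matrix.mulVec_mulVec,
    Matrix.nonsing_inv_mul _ ((Matrix.isUnit_iff_isUnit_det _).1 hGr), Matrix.one_mulVec]

theorem kron_mulVec_vkron {n r : ℕ} (V : Matrix (Fin n) (Fin r) ℂ) (c d : Fin r → ℂ) :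
    (V ⊗ₖ V) *ᵥ vkron c d = vkron (V *ᵥ c) (V *ᵥ d) := by
  ext ⟨i, j⟩
  simp only [Matrix.mulVec, dotProduct, vkron, Matrix.kroneckerMap_apply, Fintype.sum_prod_type,
    Finset.sum_mul_sum]
  exact Finset.sum_congr rfl fun k _ => Finset.sum_congr rfl fun l _ => by ring

theorem reduced_H2_interpolation_primal {n r : ℕ}
    (E A N : Matrix (Fin n) (Fin n) ℂ) (Q : Matrix (Fin n) (Fin n × Fin n) ℂ)
    (B C : Fin n → ℂ) (V W : Matrix (Fin n) (Fin r) ℂ) (σ1 σ2 : ℂ)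
    (hG1 : IsUnit (Gm E A σ1)) (hG2 : IsUnit (Gm E A σ2))
    (hG12 : IsUnit (Gm E A (σ1 + σ2)))
    (hGr1 : IsUnit (Wᵀ * Gm E A σ1 * V)) (hGr2 : IsUnit (Wᵀ * Gm E A σ2 * V))
    (hGr12 : IsUnit (Wᵀ * Gm E A (σ1 + σ2) * V))
    (hx1 : ∃ c : Fin r → ℂ, x1 E A B σ1 = V *ᵥ c)
    (hx2 : ∃ c : Fin r → ℂ, x1 E A B σ2 = V *ᵥ c)
    (hx12 : ∃ c : Fin r → ℂ, x2 E A N Q B σ1 σ2 = V *ᵥ c) :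
    H2 (Wᵀ * E * V) (Wᵀ * A * V) (Wᵀ * N * V) (Wᵀ * Q * (V ⊗ₖ V))
        (Wᵀ *ᵥ B) (Vᵀ *ᵥ C) σ1 σ2 = H2 E A N Q B C σ1 σ2 := by
  obtain ⟨c1, h1⟩ := hx1
  obtain ⟨c2, h2⟩ := hx2
  obtain ⟨c, h⟩ := hx12
  have e1 : x1 (Wᵀ * E * V) (Wᵀ * A * V) (Wᵀ *ᵥ B) σ1 = c1 := by
    rw [x1, Gm_reduced]; exact proj_solve _ _ _ _ _ hG1 hGr1 h1
  have e2 : x1 (Wᵀ * E * V) (Wᵀ * A * V) (Wᵀ *ᵥ B) σ2 = c2 := by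
    rw [x1, Gm_reduced]; exact proj_solve _ _ _ _ _ hG2 hGr2 h2
  have eB : B2 (Wᵀ * E * V) (Wᵀ * A * V) (Wᵀ * N * V) (Wᵀ * Q * (V ⊗ₖ V)) (Wᵀ *ᵥ B) σ1 σ2
      = Wᵀ *ᵥ B2 E A N Q B σ1 σ2 := by
    rw [B2, B2, e1, e2, h1, h2, ← kron_mulVec_vkron, ← Matrix.mulVec_add, Matrix.mulVec_add Wᵀ,
      Matrix.mulVec_smul]
    simp only [Matrix.mulVec_mulVec, Matrix.mul_assoc]
  have e : x2 (Wᵀ * E * V) (Wᵀ * A * V) (Wᵀ * N * V) (Wᵀ * Q * (V ⊗ₖ V)) (Wᵀ *ᵥ B) σ1 σ2 = c := by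
    rw [x2, eB, Gm_reduced]; exact proj_solve _ _ _ _ _ hG12 hGr12 h
  rw [H2, H2, e, h, Matrix.mulVec_transpose, Matrix.dotProduct_mulVec]
end
end

section
/- (Formula (12).) Assume Q is symmetric and let s1, s2 : ℂ be such that G(s1), G(s2) and G(s1+s2) are invertible. Then the partial derivative of the second-order transfer function with respect to its first variable satisfies deriv (fun s => H2(s, s2)) s1 = -(y1(s1+s2) ⬝ᵥ (E *ᵥ x2(s1, s2))) - (x1(s1) ⬝ᵥ (Eᵀ *ᵥ y2(s1, s2))). -/
open Matrix
open scoped Kronecker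

noncomputable section

attribute [local instance] Matrix.linftyOpNormedRing Matrix.linftyOpNormedAlgebra in
theorem hasDerivAt_inv_entry {n : ℕ} (E A : Matrix (Fin n) (Fin n) ℂ) (s : ℂ)
    (h : IsUnit (Gm E A s)) (i j : Fin n) :
    HasDerivAt (fun t => (Gm E A t)⁻¹ i j)
      ((-((Gm E A s)⁻¹ * E * (Gm E A s)⁻¹)) i j) s := by
  obtain ⟨u, hu⟩ := h
  have h1 : HasDerivAt (fun t : ℂ => Gm E A t) E s := by
    have := ((hasDerivAt_id s).smul_const E).sub_const A
    rw [one_smul] at this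
    exact this
  have h2 := hasFDerivAt_ringInverse (𝕜 := ℂ) u
  rw [hu] at h2
  have h3 := h2.comp_hasDerivAt s h1
  let L : Matrix (Fin n) (Fin n) ℂ →ₗ[ℂ] ℂ := Matrix.entryLinearMap ℂ ℂ i j
  have h4 := (LinearMap.toContinuousLinearMap L).hasFDerivAt.comp_hasDerivAt s h3
  have hi : (↑u⁻¹ : Matrix (Fin n) (Fin n) ℂ) = (Gm E A s)⁻¹ := by
    rw [← hu, Matrix.coe_units_inv]
  have hf : (fun t => (Gm E A t)⁻¹ i j) =
      (LinearMap.toContinuousLinearMap L) ∘ Ring.inverse ∘ fun t => Gm E A t := by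
    funext t
    simp only [Function.comp_apply, ← Matrix.nonsing_inv_eq_ringInverse]
    rfl
  rw [hf]
  refine h4.congr_deriv ?_
  rw [hi]
  rfl

theorem hasDerivAt_mulVec_aux {m k : Type*} [Fintype m] [Fintype k] (M : ℂ → Matrix m k ℂ)
    (M' : Matrix m k ℂ)
    (v : ℂ → k → ℂ) (v' : k → ℂ) (s : ℂ)
    (hM : ∀ i j, HasDerivAt (fun t => M t i j) (M' i j) s)
    (hv : ∀ i, HasDerivAt (fun t => v t i) (v' i) s) (i : m) :
    HasDerivAt (fun t => (M t *ᵥ v t) i) ((M' *ᵥ v s + M s *ᵥ v') i) s := by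
  simp only [Matrix.mulVec, dotProduct, Pi.add_apply, ← Finset.sum_add_distrib]
  exact HasDerivAt.fun_sum fun j _ => (hM i j).mul (hv j)

theorem mode2_dual {n : ℕ} (Q : Matrix (Fin n) (Fin n × Fin n) ℂ) (x u y : Fin n → ℂ) :
    x ⬝ᵥ (mode2 Q *ᵥ vkron u y) = y ⬝ᵥ (Q *ᵥ vkron u x) := by
  simp only [dotProduct, Matrix.mulVec, mode2, vkron, Fintype.sum_prod_type, Finset.mul_sum]
  rw [Finset.sum_comm]
  conv_rhs => rw [Finset.sum_comm]; enter [2, l]; rw [Finset.sum_comm]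
  rw [Finset.sum_congr rfl]
  intro l _
  refine Finset.sum_congr rfl fun a _ => Finset.sum_congr rfl fun b _ => ?_
  ring

theorem dot_transpose_aux {n : ℕ} (M : Matrix (Fin n) (Fin n) ℂ) (x y : Fin n → ℂ) :
    x ⬝ᵥ (Mᵀ *ᵥ y) = (M *ᵥ x) ⬝ᵥ y := by
  rw [Matrix.dotProduct_mulVec, Matrix.vecMul_transpose]

theorem H2_first_partial_formula {n : ℕ}
    (E A N : Matrix (Fin n) (Fin n) ℂ) (Q : Matrix (Fin n) (Fin n × Fin n) ℂ)
    (B C : Fin n → ℂ) (s1 s2 : ℂ)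
    (hQ : QSymm Q)
    (hG1 : IsUnit (Gm E A s1)) (hG2 : IsUnit (Gm E A s2))
    (hG12 : IsUnit (Gm E A (s1 + s2))) :
    deriv (fun s => H2 E A N Q B C s s2) s1 =
      -(y1 E A C (s1 + s2) ⬝ᵥ (E *ᵥ x2 E A N Q B s1 s2)) -
        (x1 E A B s1 ⬝ᵥ (Eᵀ *ᵥ y2 E A N Q B C s1 s2)) := by
  set d : Fin n → ℂ := (Gm E A s1)⁻¹ *ᵥ (E *ᵥ x1 E A B s1) with hd
  have hx1 : ∀ i, HasDerivAt (fun t => x1 E A B t i) ((-d) i) s1 := by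
    intro i
    have := hasDerivAt_mulVec_aux _ _ (fun _ => B) 0 s1 (hasDerivAt_inv_entry E A s1 hG1)
      (fun i => hasDerivAt_const _ _) i
    simpa [x1, hd, Matrix.neg_mulVec, Matrix.mulVec_mulVec, Matrix.mul_assoc] using this
  have hB2 : ∀ i, HasDerivAt (fun t => B2 E A N Q B t s2 i)
      ((-(Q *ᵥ vkron d (x1 E A B s2) + (1/2 : ℂ) • (N *ᵥ d))) i) s1 := by
    intro i
    have ha := hasDerivAt_mulVec_aux (fun _ => Q) 0 (fun t => vkron (x1 E A B t) (x1 E A B s2))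
      (vkron (-d) (x1 E A B s2)) s1 (fun i j => hasDerivAt_const _ _)
      (fun p => (hx1 p.1).mul_const _) i
    have hb := hasDerivAt_mulVec_aux (fun _ => N) 0 (fun t => x1 E A B t + x1 E A B s2)
      (-d) s1 (fun i j => hasDerivAt_const _ _)
      (fun p => (hx1 p).add_const _) i
    have hk : vkron (-d) (x1 E A B s2) = - vkron d (x1 E A B s2) := by
      ext p; simp [vkron]
    have hc : HasDerivAt (fun t => B2 E A N Q B t s2 i) _ s1 := ha.add (hb.const_mul (1/2 : ℂ))
    refine hc.congr_deriv ?_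
    simp [hk, Matrix.mulVec_neg]
    ring
  have hK : ∀ i j, HasDerivAt (fun t => (Gm E A (t + s2))⁻¹ i j)
      ((-((Gm E A (s1 + s2))⁻¹ * E * (Gm E A (s1 + s2))⁻¹)) i j) s1 := fun i j =>
    (hasDerivAt_inv_entry E A (s1 + s2) hG12 i j).comp_add_const s1 s2
  have hx2 := hasDerivAt_mulVec_aux _ _ _ _ s1 hK hB2
  have hH : HasDerivAt (fun s => H2 E A N Q B C s s2) _ s1 :=
    HasDerivAt.fun_sum fun i (_ : i ∈ Finset.univ) => (hx2 i).const_mul (C i)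
  rw [hH.deriv]
  change C ⬝ᵥ _ = _
  have hy : ∀ v, C ⬝ᵥ ((Gm E A (s1 + s2))⁻¹ *ᵥ v) = y1 E A C (s1 + s2) ⬝ᵥ v := by
    intro v
    rw [y1, ← Matrix.transpose_nonsing_inv, dotProduct_comm _ v, dot_transpose_aux,
      dotProduct_comm]
  have hr : x1 E A B s1 ⬝ᵥ (Eᵀ *ᵥ y2 E A N Q B C s1 s2) = d ⬝ᵥ C2 E A N Q B C s1 s2 := by
    rw [dot_transpose_aux, y2, ← Matrix.transpose_nonsing_inv, dot_transpose_aux]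
  rw [hr, C2, dotProduct_add, dotProduct_add, mode2_dual, hQ, dotProduct_smul,
    dot_transpose_aux, dotProduct_comm (N *ᵥ d), hy, Matrix.neg_mulVec, Matrix.mul_assoc,
    ← Matrix.mulVec_mulVec, ← Matrix.mulVec_mulVec, dotProduct_neg, hy, dotProduct_neg,
    dotProduct_add, dotProduct_smul, x2]
  ring
end
end

section
/- (Output error via the dual state.) Let σ : ℂ with G(σ) invertible, let x̃ : Fin n → ℂ be any approximate state, and set the primal residual r_pr = B - G(σ) *ᵥ x̃. Let x_du : Fin n → ℂ be the exact dual state, i.e., G(σ)ᵀ *ᵥ x_du = -C. Then the output error equals H1(σ) - C ⬝ᵥ x̃ = -(x_du ⬝ᵥ r_pr). -/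
open Matrix
open scoped Kronecker

noncomputable section

theorem output_error_via_dual_state {n : ℕ}
    (E A : Matrix (Fin n) (Fin n) ℂ) (B C : Fin n → ℂ) (σ : ℂ)
    (hG : IsUnit (Gm E A σ))
    (xtilde : Fin n → ℂ) (xdu : Fin n → ℂ)
    (hdu : (Gm E A σ)ᵀ *ᵥ xdu = -C) :
    H1 E A B C σ - C ⬝ᵥ xtilde = -(xdu ⬝ᵥ (B - Gm E A σ *ᵥ xtilde)) := by
  have key : ∀ v : Fin n → ℂ, C ⬝ᵥ v = -(xdu ⬝ᵥ (Gm E A σ *ᵥ v)) := by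
    intro v
    have hC : C = -((Gm E A σ)ᵀ *ᵥ xdu) := by rw [hdu, neg_neg]
    rw [hC, neg_dotProduct, mulVec_transpose, dotProduct_mulVec]
  have hx : Gm E A σ *ᵥ x1 E A B σ = B := by
    unfold x1
    rw [mulVec_mulVec, mul_nonsing_inv _ ((isUnit_iff_isUnit_det _).mp hG), one_mulVec]
  unfold H1
  rw [key, key, hx, dotProduct_sub]
  ring
end
end

section
/- (Petrov–Galerkin error representation.) Let σ : ℂ with G(σ) invertible and let V, W : Matrix (Fin n) (Fin r) ℂ. Let z : Fin r → ℂ satisfy the Petrov–Galerkin condition Wᵀ *ᵥ r_pr = 0, where r_pr = B - G(σ) *ᵥ (V *ᵥ z). Let z_du : Fin r → ℂ be arbitrary and set the dual residual r_du = -C - G(σ)ᵀ *ᵥ (W *ᵥ z_du). Then H1(σ) - C ⬝ᵥ (V *ᵥ z) = -(((G(σ)ᵀ)⁻¹ *ᵥ r_du) ⬝ᵥ r_pr). -/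
open Matrix
open scoped Kronecker

noncomputable section

theorem petrov_galerkin_error_representation {n r : ℕ}
    (E A : Matrix (Fin n) (Fin n) ℂ) (B C : Fin n → ℂ) (σ : ℂ)
    (hG : IsUnit (Gm E A σ))
    (V W : Matrix (Fin n) (Fin r) ℂ) (z zdu : Fin r → ℂ)
    (hPG : Wᵀ *ᵥ (B - Gm E A σ *ᵥ (V *ᵥ z)) = 0) :
    H1 E A B C σ - C ⬝ᵥ (V *ᵥ z) =
      -((((Gm E A σ)ᵀ)⁻¹ *ᵥ (-C - (Gm E A σ)ᵀ *ᵥ (W *ᵥ zdu))) ⬝ᵥ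
        (B - Gm E A σ *ᵥ (V *ᵥ z))) := by
  have hdet : IsUnit (Gm E A σ).det := (Matrix.isUnit_iff_isUnit_det _).mp hG
  have hdetT : IsUnit ((Gm E A σ)ᵀ).det := by rwa [Matrix.det_transpose]
  unfold H1 x1
  generalize Gm E A σ = G at *
  have h1 : (W *ᵥ zdu) ⬝ᵥ (B - G *ᵥ (V *ᵥ z)) = 0 := by
    rw [← Matrix.vecMul_transpose, ← Matrix.dotProduct_mulVec, hPG, dotProduct_zero]
  have h2 : (Gᵀ)⁻¹ *ᵥ (-C - Gᵀ *ᵥ (W *ᵥ zdu)) = -((Gᵀ)⁻¹ *ᵥ C) - W *ᵥ zdu := by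
    rw [Matrix.mulVec_sub, Matrix.mulVec_neg, Matrix.mulVec_mulVec,
      Matrix.nonsing_inv_mul _ hdetT, Matrix.one_mulVec]
  have h3 : ((Gᵀ)⁻¹ *ᵥ C) ⬝ᵥ (B - G *ᵥ (V *ᵥ z)) = C ⬝ᵥ (G⁻¹ *ᵥ B) - C ⬝ᵥ (V *ᵥ z) := by
    rw [← Matrix.transpose_nonsing_inv, Matrix.mulVec_transpose, ← Matrix.dotProduct_mulVec,
      Matrix.mulVec_sub, Matrix.mulVec_mulVec _ G⁻¹ G, Matrix.nonsing_inv_mul _ hdet,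
      Matrix.one_mulVec, dotProduct_sub]
  rw [h2, sub_dotProduct, neg_dotProduct, h1, h3]
  ring
end
end

section
/- (Petrov–Galerkin error representation for H2.) Let σ1, σ2 : ℂ with G(σ1), G(σ2), G(σ1+σ2) invertible, and let V₂, W₂ : Matrix (Fin n) (Fin r) ℂ. Let z₂ : Fin r → ℂ satisfy W₂ᵀ *ᵥ r₂pr = 0, where r₂pr = B₂(σ1, σ2) - G(σ1+σ2) *ᵥ (V₂ *ᵥ z₂). Let z₂du : Fin r → ℂ be arbitrary and set r₂du = -C - G(σ1+σ2)ᵀ *ᵥ (W₂ *ᵥ z₂du). Then H2(σ1, σ2) - C ⬝ᵥ (V₂ *ᵥ z₂) = -(((G(σ1+σ2)ᵀ)⁻¹ *ᵥ r₂du) ⬝ᵥ r₂pr). -/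
open Matrix
open scoped Kronecker

noncomputable section

theorem petrov_galerkin_error_representation_H2 {n r : ℕ}
    (E A N : Matrix (Fin n) (Fin n) ℂ) (Q : Matrix (Fin n) (Fin n × Fin n) ℂ)
    (B C : Fin n → ℂ) (σ1 σ2 : ℂ)
    (hG1 : IsUnit (Gm E A σ1)) (hG2 : IsUnit (Gm E A σ2))
    (hG12 : IsUnit (Gm E A (σ1 + σ2)))
    (V₂ W₂ : Matrix (Fin n) (Fin r) ℂ) (z₂ z₂du : Fin r → ℂ)
    (hPG : W₂ᵀ *ᵥ (B2 E A N Q B σ1 σ2 - Gm E A (σ1 + σ2) *ᵥ (V₂ *ᵥ z₂)) = 0) :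
    H2 E A N Q B C σ1 σ2 - C ⬝ᵥ (V₂ *ᵥ z₂) =
      -((((Gm E A (σ1 + σ2))ᵀ)⁻¹ *ᵥ (-C - (Gm E A (σ1 + σ2))ᵀ *ᵥ (W₂ *ᵥ z₂du))) ⬝ᵥ
        (B2 E A N Q B σ1 σ2 - Gm E A (σ1 + σ2) *ᵥ (V₂ *ᵥ z₂))) := by
  have hdet : IsUnit (Gm E A (σ1 + σ2)).det := (Matrix.isUnit_iff_isUnit_det _).mp hG12
  unfold H2 x2
  generalize B2 E A N Q B σ1 σ2 = b at *
  generalize Gm E A (σ1 + σ2) = G at *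
  have hdetT : IsUnit (Gᵀ).det := by rwa [Matrix.det_transpose]
  have hw : (W₂ *ᵥ z₂du) ⬝ᵥ (b - G *ᵥ (V₂ *ᵥ z₂)) = 0 := by
    rw [← Matrix.vecMul_transpose, ← Matrix.dotProduct_mulVec, hPG, dotProduct_zero]
  have hc : ((Gᵀ)⁻¹ *ᵥ C) ⬝ᵥ (b - G *ᵥ (V₂ *ᵥ z₂)) = C ⬝ᵥ (G⁻¹ *ᵥ b) - C ⬝ᵥ (V₂ *ᵥ z₂) := by
    rw [← Matrix.transpose_nonsing_inv, Matrix.mulVec_transpose, ← Matrix.dotProduct_mulVec,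
      Matrix.mulVec_sub, Matrix.mulVec_mulVec _ G⁻¹ G, Matrix.nonsing_inv_mul _ hdet,
      Matrix.one_mulVec, dotProduct_sub]
  rw [Matrix.mulVec_sub, Matrix.mulVec_neg, Matrix.mulVec_mulVec _ (Gᵀ)⁻¹ Gᵀ,
    Matrix.nonsing_inv_mul _ hdetT, Matrix.one_mulVec, sub_dotProduct, neg_dotProduct, hw, hc]
  ring
end
end
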